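/- Monotonicity of the relative entropy of resource under δ-resource-non-generating channels: if Λ is a CPTP map such that R_M(Λ(σ)) ≤ δ for every σ ∈ M (with R_M the generalised robustness), then for every state ρ, D_M(Λ(ρ)) ≤ D_M(ρ) − log(1−δ). -/

import Mathlib

open scoped BigOperators ComplexOrder
noncomputable section

variable {ι κ : Type*} [Fintype ι] [DecidableEq ι] [Fintype κ] [DecidableEq κ]

def IsDensity {α : Type*} [Fintype α] [DecidableEq α] (ρ : Matrix α α ℂ) : Prop :=
  ρ.PosSemidef ∧ ρ.trace = 1

def mlog {α : Type*} [Fintype α] [DecidableEq α] (A : Matrix α α ℂ) : Matrix α α ℂ :=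
  if h : A.IsHermitian then h.cfc Real.log else 0

def SuppLE {α : Type*} [Fintype α] (ρ σ : Matrix α α ℂ) : Prop :=
  ∀ v, σ.mulVec v = 0 → ρ.mulVec v = 0

/-- Umegaki relative entropy, `+∞` if the support condition fails. -/
def relEnt {α : Type*} [Fintype α] [DecidableEq α] (ρ σ : Matrix α α ℂ) : EReal :=
  @ite _ (SuppLE ρ σ) (Classical.propDecidable _)
    (((ρ * (mlog ρ - mlog σ)).trace.re : ℝ) : EReal) ⊤

/-- Generalised robustness with respect to a set `M` of states (`+∞` if infeasible). -/
def Rob {α : Type*} [Fintype α] [DecidableEq α] (M : Set (Matrix α α ℂ))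
    (ρ : Matrix α α ℂ) : EReal :=
  sInf {x : EReal | ∃ s : ℝ, 0 ≤ s ∧
    (∃ σ, IsDensity σ ∧ (((1 + s)⁻¹ : ℂ) • (ρ + (s : ℂ) • σ)) ∈ M) ∧ x = (s : ℝ)}

/-- The map `Λ ⊗ id_k` acting on block matrices. -/
def mapTensorId (Λ : Matrix ι ι ℂ →ₗ[ℂ] Matrix κ κ ℂ) (k : ℕ)
    (A : Matrix (ι × Fin k) (ι × Fin k) ℂ) : Matrix (κ × Fin k) (κ × Fin k) ℂ :=
  fun p q => Λ (Matrix.of fun i j => A (i, p.2) (j, q.2)) p.1 q.1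

/-- Complete positivity. -/
def IsCP (Λ : Matrix ι ι ℂ →ₗ[ℂ] Matrix κ κ ℂ) : Prop :=
  ∀ k (A : Matrix (ι × Fin k) (ι × Fin k) ℂ), A.PosSemidef → (mapTensorId Λ k A).PosSemidef

/-- Trace preservation. -/
def IsTP (Λ : Matrix ι ι ℂ →ₗ[ℂ] Matrix κ κ ℂ) : Prop := ∀ A, (Λ A).trace = A.trace

/-!
The Nussbaum–Szkoła distributions `P`, `Q` of a pair `ρ`, `σ` turn the Umegaki relative entropy
into the classical sum `∑ P (log P - log Q)`. Along the line `Q + t P`, `t ≥ 0`, the derivative of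
`∑ P log (Q + t P)` is `∑ P² / (Q + t P)`, which is the maximum of a quadratic form on matrices.
The Kadison–Schwarz inequality for the dual of a 2-positive trace-preserving map `Λ` shows that this
maximum does not increase when `ρ`, `σ` are replaced by `Λ ρ` and any `τ ≥ Λ σ`. Integrating from
`t = 0` to `∞`, where the logarithms of `t` cancel because the traces agree, gives data processing
`D(Λ ρ ‖ τ) ≤ D(ρ ‖ σ)`.

Robustness at most `δ` supplies, for each `s > δ`, some `σ' ∈ M'` with `Λ σ ≤ (1 + s) σ'`. Taking
`τ = (1 + s) σ'` costs `log (1 + s)`, and `s → δ` leaves `log (1 + δ) ≤ -log (1 - δ)`.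
-/

section Classical

open Filter Finset Topology

variable {I J : Type*}

lemma add_mul_ne_zero {P Q : I → ℝ} (hP : ∀ i, 0 ≤ P i) (hQ : ∀ i, 0 ≤ Q i)
    (hPQ : ∀ i, Q i = 0 → P i = 0) {t : ℝ} (ht : 0 ≤ t) (i : I) (hi : P i ≠ 0) :
    Q i + t * P i ≠ 0 :=
  (add_pos_of_pos_of_nonneg ((hQ i).lt_of_ne' (mt (hPQ i) hi)) (mul_nonneg ht (hP i))).ne'

variable [Fintype I] [Fintype J]

lemma hasDerivAt_sum_mul_log {P Q : I → ℝ} {t : ℝ} (h : ∀ i, P i ≠ 0 → Q i + t * P i ≠ 0) :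
    HasDerivAt (fun t ↦ ∑ i, P i * Real.log (Q i + t * P i))
      (∑ i, P i ^ 2 / (Q i + t * P i)) t := by
  refine HasDerivAt.fun_sum fun i _ ↦ ?_
  by_cases hP : P i = 0
  · simpa [hP] using hasDerivAt_const t (0 : ℝ)
  · have hlin : HasDerivAt (fun t ↦ Q i + t * P i) (P i) t := by
      simpa using ((hasDerivAt_id t).mul_const (P i)).const_add (Q i)
    simpa only [sq, mul_div_assoc] using (hlin.log (h i hP)).const_mul (P i)

lemma tendsto_sum_mul_log_sub_atTop {P : I → ℝ} (hP : ∀ i, 0 ≤ P i) (Q : I → ℝ) :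
    Tendsto (fun t ↦ ∑ i, P i * Real.log (Q i + t * P i) - (∑ i, P i) * Real.log t) atTop
      (𝓝 (∑ i, P i * Real.log (P i))) := by
  simp only [sum_mul, ← sum_sub_distrib]
  refine tendsto_finsetSum _ fun i _ ↦ ?_
  rcases (hP i).eq_or_lt with hi | hi
  · simp [← hi]
  have hlim : Tendsto (fun t ↦ P i * Real.log (t⁻¹ * Q i + P i)) atTop
      (𝓝 (P i * Real.log (P i))) := by
    refine Tendsto.const_mul _ (Tendsto.log ?_ hi.ne')
    simpa using (tendsto_inv_atTop_zero.mul_const (Q i)).add_const (P i)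
  have hpos : ∀ᶠ t in atTop, 0 < Q i + t * P i :=
    (tendsto_atTop_add_const_left _ _ (tendsto_id.atTop_mul_const hi)).eventually_gt_atTop 0
  refine hlim.congr' ?_
  filter_upwards [hpos, eventually_gt_atTop 0] with t hQ ht
  rw [← mul_sub, ← Real.log_div hQ.ne' ht.ne']
  congr 2
  field_simp

lemma sum_sq_div_add_mul_le {P Q : I → ℝ} (hP : ∀ i, 0 ≤ P i) (hQ : ∀ i, 0 ≤ Q i)
    (hPQ : ∀ i, Q i = 0 → P i = 0) {t : ℝ} (ht : 0 ≤ t) :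
    ∑ i, P i ^ 2 / (Q i + t * P i) ≤ ∑ i, P i ^ 2 / Q i := by
  refine sum_le_sum fun i _ ↦ ?_
  rcases (hQ i).eq_or_lt with hi | hi
  · simp [hPQ i hi.symm]
  · gcongr
    exact le_add_of_nonneg_right (mul_nonneg ht (hP i))

-- Were `Q' j = 0 < P' j`, the left-hand sums would be at least `P' j / t`, unbounded as `t → 0`.
lemma eq_zero_of_sum_sq_div_le {P Q : I → ℝ} {P' Q' : J → ℝ}
    (hP : ∀ i, 0 ≤ P i) (hQ : ∀ i, 0 ≤ Q i) (hP' : ∀ j, 0 ≤ P' j) (hQ' : ∀ j, 0 ≤ Q' j)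
    (hPQ : ∀ i, Q i = 0 → P i = 0)
    (hle : ∀ t, 0 < t →
      ∑ j, P' j ^ 2 / (Q' j + t * P' j) ≤ ∑ i, P i ^ 2 / (Q i + t * P i)) {j : J}
    (hj : Q' j = 0) : P' j = 0 := by
  by_contra hne
  have hPj : 0 < P' j := (hP' j).lt_of_ne' hne
  set C := ∑ i, P i ^ 2 / Q i
  have hC : 0 ≤ C := sum_nonneg fun i _ ↦ div_nonneg (sq_nonneg _) (hQ i)
  have hbound : ∀ t, 0 < t → P' j / t ≤ C := fun t ht ↦ calc
    P' j / t = P' j ^ 2 / (Q' j + t * P' j) := by rw [hj]; field_simp; simp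
    _ ≤ ∑ j, P' j ^ 2 / (Q' j + t * P' j) :=
      single_le_sum (f := fun j ↦ P' j ^ 2 / (Q' j + t * P' j))
        (fun j _ ↦ div_nonneg (sq_nonneg _) (add_nonneg (hQ' j) (mul_nonneg ht.le (hP' j))))
        (mem_univ j)
    _ ≤ ∑ i, P i ^ 2 / (Q i + t * P i) := hle t ht
    _ ≤ C := sum_sq_div_add_mul_le hP hQ hPQ ht.le
  have := hbound (P' j / (C + 1)) (by positivity)
  rw [div_div_cancel₀ hPj.ne'] at this
  linarith

lemma sum_mul_log_sub_log_le_of_sum_sq_div_le {P Q : I → ℝ} {P' Q' : J → ℝ}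
    (hP : ∀ i, 0 ≤ P i) (hQ : ∀ i, 0 ≤ Q i) (hP' : ∀ j, 0 ≤ P' j) (hQ' : ∀ j, 0 ≤ Q' j)
    (hPQ : ∀ i, Q i = 0 → P i = 0) (hPQ' : ∀ j, Q' j = 0 → P' j = 0)
    (hsum : ∑ i, P i = ∑ j, P' j)
    (hle : ∀ t, 0 < t →
      ∑ j, P' j ^ 2 / (Q' j + t * P' j) ≤ ∑ i, P i ^ 2 / (Q i + t * P i)) :
    ∑ j, P' j * (Real.log (P' j) - Real.log (Q' j)) ≤
      ∑ i, P i * (Real.log (P i) - Real.log (Q i)) := by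
  set G : ℝ → ℝ := fun t ↦
    ∑ i, P i * Real.log (Q i + t * P i) - ∑ j, P' j * Real.log (Q' j + t * P' j)
  have hderiv (t : ℝ) (ht : 0 ≤ t) : HasDerivAt G
      (∑ i, P i ^ 2 / (Q i + t * P i) - ∑ j, P' j ^ 2 / (Q' j + t * P' j)) t :=
    (hasDerivAt_sum_mul_log (add_mul_ne_zero hP hQ hPQ ht)).sub
      (hasDerivAt_sum_mul_log (add_mul_ne_zero hP' hQ' hPQ' ht))
  have hmono : MonotoneOn G (Set.Ici 0) := by
    refine monotoneOn_of_deriv_nonneg (convex_Ici 0)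
      (fun t ht ↦ (hderiv t ht).continuousAt.continuousWithinAt)
      (fun t ht ↦ (hderiv t (interior_subset ht)).differentiableAt.differentiableWithinAt)
      fun t ht ↦ ?_
    rw [interior_Ici] at ht
    rw [(hderiv t (le_of_lt ht)).deriv]
    exact sub_nonneg.2 (hle t ht)
  have hlim : Tendsto G atTop
      (𝓝 (∑ i, P i * Real.log (P i) - ∑ j, P' j * Real.log (P' j))) := by
    refine ((tendsto_sum_mul_log_sub_atTop hP Q).sub
      (tendsto_sum_mul_log_sub_atTop hP' Q')).congr fun t ↦ ?_
    rw [hsum]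
    ring
  have hG0 := ge_of_tendsto hlim <| (eventually_ge_atTop 0).mono fun t ht ↦
    hmono Set.self_mem_Ici (Set.mem_Ici.2 ht) ht
  simp only [G, zero_mul, add_zero] at hG0
  simp only [mul_sub, sum_sub_distrib]
  linarith

end Classical

section Spectral

open Matrix

variable {n : Type*} [Fintype n] [DecidableEq n]

/-- The matrix of `X` in the orthonormal eigenbases of `A` (on the source) and `B` (on the
target). -/
def eigenCoord {m : Type*} [Fintype m] [DecidableEq m] {B : Matrix m m ℂ} {A : Matrix n n ℂ}
    (hB : B.IsHermitian) (hA : A.IsHermitian) (X : Matrix m n ℂ) : Matrix m n ℂ :=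
  (hB.eigenvectorUnitary : Matrix m m ℂ)ᴴ * X * (hA.eigenvectorUnitary : Matrix n n ℂ)

lemma exists_eigenCoord_eq {m : Type*} [Fintype m] [DecidableEq m] {B : Matrix m m ℂ}
    {A : Matrix n n ℂ} (hB : B.IsHermitian) (hA : A.IsHermitian) (x : Matrix m n ℂ) :
    ∃ X, eigenCoord hB hA X = x := by
  refine ⟨(hB.eigenvectorUnitary : Matrix m m ℂ) * x * (hA.eigenvectorUnitary : Matrix n n ℂ)ᴴ, ?_⟩
  have hU := Unitary.coe_star_mul_self hA.eigenvectorUnitary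
  have hV := Unitary.coe_star_mul_self hB.eigenvectorUnitary
  rw [star_eq_conjTranspose] at hU hV
  simp only [eigenCoord, ← Matrix.mul_assoc, hV, Matrix.one_mul]
  rw [Matrix.mul_assoc, hU, Matrix.mul_one]

lemma trace_conjTranspose_mul_cfc_mul_cfc {m : Type*} [Fintype m] [DecidableEq m]
    {B : Matrix m m ℂ} {A : Matrix n n ℂ} (hB : B.IsHermitian) (hA : A.IsHermitian)
    (g f : ℝ → ℝ) (X Y : Matrix m n ℂ) :
    (Xᴴ * cfc g B * Y * cfc f A).trace = ∑ k : m × n,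
      (g (hB.eigenvalues k.1) * f (hA.eigenvalues k.2) : ℝ) *
        (star (eigenCoord hB hA X k.1 k.2) * eigenCoord hB hA Y k.1 k.2) := by
  have hcycle : (Xᴴ * cfc g B * Y * cfc f A).trace =
      ((eigenCoord hB hA X)ᴴ * diagonal (fun j ↦ (g (hB.eigenvalues j) : ℂ)) *
        eigenCoord hB hA Y * diagonal fun i ↦ (f (hA.eigenvalues i) : ℂ)).trace := by
    rw [hA.cfc_eq, hB.cfc_eq, IsHermitian.cfc, IsHermitian.cfc, Unitary.conjStarAlgAut_apply,
      Unitary.conjStarAlgAut_apply, ← Matrix.mul_assoc, trace_mul_comm]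
    simp only [eigenCoord, conjTranspose_mul, conjTranspose_conjTranspose, Matrix.mul_assoc,
      star_eq_conjTranspose]
    rfl
  rw [hcycle, Fintype.sum_prod_type_right]
  simp only [trace, diag_apply, mul_diagonal]
  refine Finset.sum_congr rfl fun i _ ↦ ?_
  rw [mul_apply, Finset.sum_mul]
  refine Finset.sum_congr rfl fun j _ ↦ ?_
  rw [mul_diagonal, conjTranspose_apply]
  push_cast
  ring

lemma mlog_eq_cfc (A : Matrix n n ℂ) : mlog A = cfc Real.log A := by
  by_cases hA : A.IsHermitian
  · rw [mlog, dif_pos hA, hA.cfc_eq]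
  · rw [mlog, dif_neg hA, cfc_apply_of_not_predicate A (mt IsSelfAdjoint.isHermitian hA)]

end Spectral

section Kernel

open Matrix

lemma conjTranspose_mul_mul_self_eq_zero_iff {m n : Type*} [Finite m] [Fintype n]
    {ρ : Matrix n n ℂ} (hρ : ρ.PosSemidef) (B : Matrix n m ℂ) : Bᴴ * ρ * B = 0 ↔ ρ * B = 0 := by
  classical
  cases nonempty_fintype m
  refine ⟨fun h ↦ ext_of_mulVec_single fun i ↦ ?_, fun h ↦ by
    rw [Matrix.mul_assoc, h, Matrix.mul_zero]⟩
  rw [← mulVec_mulVec, zero_mulVec, ← hρ.dotProduct_mulVec_zero_iff, star_mulVec,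
    ← dotProduct_mulVec, mulVec_mulVec, mulVec_mulVec, h, zero_mulVec, dotProduct_zero]

variable {n : Type*} [Fintype n] [DecidableEq n] {ρ σ : Matrix n n ℂ}

/-- The orthogonal projection onto the kernel of a Hermitian matrix. -/
def kerProj (σ : Matrix n n ℂ) : Matrix n n ℂ :=
  cfc (fun x : ℝ ↦ if x = 0 then 1 else 0) σ

lemma continuousOn_spectrum (f : ℝ → ℝ) (σ : Matrix n n ℂ) : ContinuousOn f (spectrum ℝ σ) :=
  finite_real_spectrum.continuousOn f

lemma isHermitian_kerProj (σ : Matrix n n ℂ) : (kerProj σ).IsHermitian :=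
  (cfc_predicate _ σ : IsSelfAdjoint (kerProj σ))

lemma kerProj_mul_kerProj (σ : Matrix n n ℂ) : kerProj σ * kerProj σ = kerProj σ := by
  rw [kerProj, ← cfc_mul _ _ σ (continuousOn_spectrum _ σ) (continuousOn_spectrum _ σ)]
  refine cfc_congr fun x _ ↦ ?_
  by_cases hx : x = 0 <;> simp [hx]

lemma mul_kerProj (hσ : σ.IsHermitian) : σ * kerProj σ = 0 := by
  nth_rw 1 [← cfc_id' ℝ σ hσ.isSelfAdjoint]
  rw [kerProj, ← cfc_mul _ _ σ (continuousOn_spectrum _ σ) (continuousOn_spectrum _ σ),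
    ← cfc_zero ℝ σ]
  refine cfc_congr fun x _ ↦ ?_
  by_cases hx : x = 0 <;> simp [hx]

lemma cfc_inv_mul_self (hσ : σ.IsHermitian) :
    cfc (fun x : ℝ ↦ x⁻¹) σ * σ = 1 - kerProj σ := by
  nth_rw 2 [← cfc_id' ℝ σ hσ.isSelfAdjoint]
  rw [kerProj, ← cfc_mul _ _ σ (continuousOn_spectrum _ σ) (continuousOn_spectrum _ σ),
    ← cfc_const_one ℝ σ hσ.isSelfAdjoint,
    ← cfc_sub _ _ σ (continuousOn_spectrum _ σ) (continuousOn_spectrum _ σ)]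
  refine cfc_congr fun x _ ↦ ?_
  by_cases hx : x = 0 <;> simp [hx]

lemma suppLE_iff_mul_kerProj (hσ : σ.IsHermitian) : SuppLE ρ σ ↔ ρ * kerProj σ = 0 := by
  refine ⟨fun h ↦ ext_of_mulVec_single fun i ↦ ?_, fun h v hv ↦ ?_⟩
  · rw [← mulVec_mulVec, zero_mulVec]
    exact h _ (by rw [mulVec_mulVec, mul_kerProj hσ, zero_mulVec])
  · have hfix : kerProj σ *ᵥ v = v := by
      rw [← sub_sub_cancel 1 (kerProj σ), ← cfc_inv_mul_self hσ, sub_mulVec, one_mulVec,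
        ← mulVec_mulVec, hv, mulVec_zero, sub_zero]
    rw [← hfix, mulVec_mulVec, h, zero_mulVec]

lemma mul_kerProj_eq_zero_iff_trace (hρ : ρ.PosSemidef) :
    ρ * kerProj σ = 0 ↔ (ρ * kerProj σ).trace = 0 := by
  refine ⟨fun h ↦ by rw [h, trace_zero], fun h ↦ ?_⟩
  have hP : (kerProj σ)ᴴ = kerProj σ := isHermitian_kerProj σ
  rw [← conjTranspose_mul_mul_self_eq_zero_iff hρ,
    ← (hρ.conjTranspose_mul_mul_same (kerProj σ)).trace_eq_zero_iff, hP, trace_mul_cycle,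
    kerProj_mul_kerProj, trace_mul_comm, h]

lemma mlog_smul (hσ : σ.IsHermitian) {a : ℝ} (ha : a ≠ 0) :
    mlog (a • σ) = mlog σ + Real.log a • (1 - kerProj σ) := by
  have hcont (f : ℝ → ℝ) := continuousOn_spectrum f σ
  rw [mlog_eq_cfc, mlog_eq_cfc, ← cfc_comp_const_mul a Real.log σ
    ((finite_real_spectrum.image _).continuousOn _)
    hσ.isSelfAdjoint, kerProj, ← cfc_const_one ℝ σ hσ.isSelfAdjoint,
    ← cfc_sub _ _ σ (hcont _) (hcont _), ← cfc_smul _ _ σ (hcont _),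
    ← cfc_add σ _ _ (hcont _) (hcont _)]
  refine cfc_congr fun x _ ↦ ?_
  by_cases hx : x = 0
  · simp [hx]
  · simp [hx, Real.log_mul ha hx, add_comm]

lemma relEnt_smul_right (hσ : σ.IsHermitian) {a : ℝ} (ha : a ≠ 0) :
    relEnt ρ (a • σ) = relEnt ρ σ - ((ρ.trace.re * Real.log a : ℝ) : EReal) := by
  have hsupp : SuppLE ρ (a • σ) ↔ SuppLE ρ σ := by
    simp only [SuppLE, smul_mulVec, smul_eq_zero, ha, false_or]
  by_cases h : SuppLE ρ σ
  · have hker := (suppLE_iff_mul_kerProj hσ).1 h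
    have hmul : ρ * (mlog ρ - mlog (a • σ)) = ρ * (mlog ρ - mlog σ) - Real.log a • ρ := by
      rw [mlog_smul hσ ha, ← sub_sub, Matrix.mul_sub ρ _ (_ • _), Matrix.mul_smul,
        Matrix.mul_sub ρ 1, hker, Matrix.mul_one, sub_zero]
    rw [relEnt, relEnt, if_pos (hsupp.2 h), if_pos h, hmul, ← EReal.coe_sub, trace_sub,
      trace_smul, Complex.sub_re, Complex.smul_re, smul_eq_mul, mul_comm]
  · rw [relEnt, relEnt, if_neg (mt hsupp.1 h), if_neg h, EReal.top_sub_coe]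

end Kernel

section NussbaumSzkola

open Matrix

variable {n : Type*} [Fintype n] [DecidableEq n] {ρ σ : Matrix n n ℂ}

/-- The squared overlap `|⟨v_j, u_i⟩|²` of the eigenvectors `v_j` of `σ` and `u_i` of `ρ`, indexed
by `k = (j, i)`. -/
def overlap (hσ : σ.IsHermitian) (hρ : ρ.IsHermitian) (k : n × n) : ℝ :=
  Complex.normSq (eigenCoord hσ hρ 1 k.1 k.2)

/-- The Nussbaum–Szkoła distribution `|⟨v_j, u_i⟩|² p_i` of `ρ` relative to `σ`, where `p_i` are
the eigenvalues of `ρ`. -/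
def nsFst (hσ : σ.IsHermitian) (hρ : ρ.IsHermitian) (k : n × n) : ℝ :=
  overlap hσ hρ k * hρ.eigenvalues k.2

/-- The companion `|⟨v_j, u_i⟩|² q_j` of `nsFst`, where `q_j` are the eigenvalues of `σ`. The
quantum relative entropy of `ρ` and `σ` is the classical one of `nsFst` and `nsSnd`. -/
def nsSnd (hσ : σ.IsHermitian) (hρ : ρ.IsHermitian) (k : n × n) : ℝ :=
  overlap hσ hρ k * hσ.eigenvalues k.1

lemma nsFst_nonneg (hσ : σ.IsHermitian) (hρ : ρ.PosSemidef) (k : n × n) :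
    0 ≤ nsFst hσ hρ.isHermitian k :=
  mul_nonneg (Complex.normSq_nonneg _) (hρ.eigenvalues_nonneg k.2)

lemma nsSnd_nonneg (hσ : σ.PosSemidef) (hρ : ρ.IsHermitian) (k : n × n) :
    0 ≤ nsSnd hσ.isHermitian hρ k :=
  mul_nonneg (Complex.normSq_nonneg _) (hσ.eigenvalues_nonneg k.1)

lemma trace_cfc_mul_cfc (hσ : σ.IsHermitian) (hρ : ρ.IsHermitian) (g f : ℝ → ℝ) :
    (cfc g σ * cfc f ρ).trace =
      ((∑ k, overlap hσ hρ k * (g (hσ.eigenvalues k.1) * f (hρ.eigenvalues k.2)) : ℝ) : ℂ) := by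
  have h := trace_conjTranspose_mul_cfc_mul_cfc hσ hρ g f 1 1
  simp only [conjTranspose_one, Matrix.one_mul, Matrix.mul_one] at h
  rw [h, Complex.ofReal_sum]
  refine Finset.sum_congr rfl fun k _ ↦ ?_
  rw [overlap, mul_comm, Complex.ofReal_mul (Complex.normSq _), Complex.normSq_eq_conj_mul_self]
  rfl

lemma trace_re_eq_sum_nsFst (hσ : σ.IsHermitian) (hρ : ρ.IsHermitian) :
    ρ.trace.re = ∑ k, nsFst hσ hρ k := by
  have h := trace_cfc_mul_cfc hσ hρ (fun _ ↦ 1) id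
  rw [cfc_const_one ℝ σ hσ.isSelfAdjoint, cfc_id ℝ ρ hρ.isSelfAdjoint, Matrix.one_mul] at h
  simp [h, nsFst]

lemma suppLE_iff_nsFst_eq_zero (hσ : σ.IsHermitian) (hρ : ρ.PosSemidef) :
    SuppLE ρ σ ↔ ∀ k, nsSnd hσ hρ.isHermitian k = 0 → nsFst hσ hρ.isHermitian k = 0 := by
  have htrace := trace_cfc_mul_cfc hσ hρ.isHermitian (fun x ↦ if x = 0 then 1 else 0) id
  rw [cfc_id ℝ ρ hρ.isHermitian.isSelfAdjoint, trace_mul_comm, ← kerProj] at htrace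
  rw [suppLE_iff_mul_kerProj hσ, mul_kerProj_eq_zero_iff_trace hρ, htrace, Complex.ofReal_eq_zero,
    Finset.sum_eq_zero_iff_of_nonneg]
  · refine forall_congr' fun k ↦ ?_
    by_cases hk : hσ.eigenvalues k.1 = 0 <;> simp +contextual [nsFst, nsSnd, hk]
  · intro k _
    refine mul_nonneg (Complex.normSq_nonneg _) (mul_nonneg ?_ (hρ.eigenvalues_nonneg k.2))
    split_ifs <;> norm_num

lemma trace_mul_mlog_sub_mlog (hσ : σ.IsHermitian) (hρ : ρ.IsHermitian)
    (h : ∀ k, nsSnd hσ hρ k = 0 → nsFst hσ hρ k = 0) :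
    (ρ * (mlog ρ - mlog σ)).trace.re =
      ∑ k, nsFst hσ hρ k * (Real.log (nsFst hσ hρ k) - Real.log (nsSnd hσ hρ k)) := by
  have hρρ : ρ * mlog ρ = cfc (fun _ : ℝ ↦ 1) σ * cfc (fun x : ℝ ↦ x * Real.log x) ρ := by
    rw [mlog_eq_cfc, cfc_const_one ℝ σ hσ.isSelfAdjoint, Matrix.one_mul,
      cfc_mul (fun x ↦ x) Real.log ρ (continuousOn_spectrum _ ρ) (continuousOn_spectrum _ ρ),
      cfc_id' ℝ ρ hρ.isSelfAdjoint]
  have hρσ : (ρ * mlog σ).trace = (cfc Real.log σ * cfc (id : ℝ → ℝ) ρ).trace := by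
    rw [mlog_eq_cfc, cfc_id ℝ ρ hρ.isSelfAdjoint, trace_mul_comm]
  rw [Matrix.mul_sub, trace_sub, hρρ, hρσ, trace_cfc_mul_cfc hσ hρ, trace_cfc_mul_cfc hσ hρ,
    ← Complex.ofReal_sub, Complex.ofReal_re, ← Finset.sum_sub_distrib]
  refine Finset.sum_congr rfl fun k _ ↦ ?_
  by_cases hk : nsFst hσ hρ k = 0
  · rcases mul_eq_zero.1 hk with h0 | h0 <;> simp [hk, h0]
  · have hc := left_ne_zero_of_mul hk
    rw [nsFst, nsSnd, Real.log_mul hc (right_ne_zero_of_mul hk),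
      Real.log_mul hc (right_ne_zero_of_mul (mt (h k) hk)), id]
    ring

lemma relEnt_eq_sum (hσ : σ.IsHermitian) (hρ : ρ.PosSemidef) (h : SuppLE ρ σ) :
    relEnt ρ σ = ((∑ k, nsFst hσ hρ.isHermitian k * (Real.log (nsFst hσ hρ.isHermitian k) -
      Real.log (nsSnd hσ hρ.isHermitian k)) : ℝ) : EReal) := by
  rw [relEnt, if_pos h,
    trace_mul_mlog_sub_mlog hσ hρ.isHermitian ((suppLE_iff_nsFst_eq_zero hσ hρ).1 h)]

/-- With `L_σ` and `R_ρ` the left and right multiplication operators on the Hilbert–Schmidt space,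
the concave form `X ↦ 2 Re ⟨X, ρ⟩ - ⟨X, (L_σ + t R_ρ) X⟩`, whose maximum is the resolvent
expression `⟨ρ, (L_σ + t R_ρ)⁻¹ ρ⟩`. -/
def resolventForm {n : Type*} [Fintype n] (ρ σ : Matrix n n ℂ) (t : ℝ) (X : Matrix n n ℂ) : ℝ :=
  2 * (Xᴴ * ρ).trace.re - (Xᴴ * σ * X).trace.re - t * (Xᴴ * X * ρ).trace.re

lemma two_mul_re_star_mul_sub_mul_normSq {x z : ℂ} {s : ℝ} (hz : s = 0 → z = 0) :
    2 * (star x * z).re - s * Complex.normSq x =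
      Complex.normSq z / s - s * Complex.normSq (x - z / s) := by
  by_cases hs : s = 0
  · simp [hs, hz hs]
  · have hdiv : x - z / s = ⟨x.re - z.re / s, x.im - z.im / s⟩ := by
      apply Complex.ext <;> simp
    simp only [hdiv, Complex.normSq_apply, Complex.star_def, Complex.mul_re, Complex.conj_re,
      Complex.conj_im]
    field_simp
    ring

lemma resolventForm_eq_sum (hσ : σ.IsHermitian) (hρ : ρ.IsHermitian) (t : ℝ)
    (X : Matrix n n ℂ) :
    resolventForm ρ σ t X = ∑ k : n × n,
      (2 * (star (eigenCoord hσ hρ X k.1 k.2) *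
          (eigenCoord hσ hρ 1 k.1 k.2 * hρ.eigenvalues k.2)).re -
        (hσ.eigenvalues k.1 + t * hρ.eigenvalues k.2) *
          Complex.normSq (eigenCoord hσ hρ X k.1 k.2)) := by
  have hlin := trace_conjTranspose_mul_cfc_mul_cfc hσ hρ (fun _ ↦ 1) id X 1
  have hleft := trace_conjTranspose_mul_cfc_mul_cfc hσ hρ id (fun _ ↦ 1) X X
  have hright := trace_conjTranspose_mul_cfc_mul_cfc hσ hρ (fun _ ↦ 1) id X X
  rw [cfc_const_one ℝ σ hσ.isSelfAdjoint, cfc_id ℝ ρ hρ.isSelfAdjoint] at hlin hright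
  rw [cfc_const_one ℝ ρ hρ.isSelfAdjoint, cfc_id ℝ σ hσ.isSelfAdjoint] at hleft
  simp only [Matrix.mul_one] at hlin hleft hright
  rw [resolventForm, hlin, hleft, hright]
  simp only [Complex.re_sum, Finset.mul_sum, ← Finset.sum_sub_distrib]
  refine Finset.sum_congr rfl fun k _ ↦ ?_
  simp only [id, Complex.re_ofReal_mul, Complex.star_def, ← Complex.normSq_eq_conj_mul_self,
    Complex.ofReal_re]
  rw [← mul_assoc (starRingEnd ℂ _), Complex.re_mul_ofReal]
  ring

lemma normSq_eigenCoord_one_mul_div (hσ : σ.IsHermitian) (hρ : ρ.IsHermitian) (t : ℝ)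
    (k : n × n) :
    Complex.normSq (eigenCoord hσ hρ 1 k.1 k.2 * hρ.eigenvalues k.2) /
        (hσ.eigenvalues k.1 + t * hρ.eigenvalues k.2) =
      nsFst hσ hρ k ^ 2 / (nsSnd hσ hρ k + t * nsFst hσ hρ k) := by
  rw [Complex.normSq_mul, Complex.normSq_ofReal, nsFst, nsSnd, ← overlap]
  by_cases hc : overlap hσ hρ k = 0
  · simp [hc]
  · rw [mul_left_comm t, ← mul_add, mul_pow, sq (overlap _ _ _), mul_assoc,
      mul_div_mul_left _ _ hc, sq]

lemma resolventForm_eq_sub (hσ : σ.PosSemidef) (hρ : ρ.PosSemidef) {t : ℝ} (ht : 0 < t)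
    (X : Matrix n n ℂ) :
    resolventForm ρ σ t X =
      ∑ k, nsFst hσ.isHermitian hρ.isHermitian k ^ 2 /
        (nsSnd hσ.isHermitian hρ.isHermitian k + t * nsFst hσ.isHermitian hρ.isHermitian k) -
      ∑ k : n × n, (hσ.isHermitian.eigenvalues k.1 + t * hρ.isHermitian.eigenvalues k.2) *
        Complex.normSq (eigenCoord hσ.isHermitian hρ.isHermitian X k.1 k.2 -
          eigenCoord hσ.isHermitian hρ.isHermitian 1 k.1 k.2 * hρ.isHermitian.eigenvalues k.2 /
            (hσ.isHermitian.eigenvalues k.1 + t * hρ.isHermitian.eigenvalues k.2 : ℝ)) := by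
  rw [resolventForm_eq_sum hσ.isHermitian hρ.isHermitian, ← Finset.sum_sub_distrib]
  refine Finset.sum_congr rfl fun k _ ↦ ?_
  rw [two_mul_re_star_mul_sub_mul_normSq, normSq_eigenCoord_one_mul_div]
  intro hk
  have hp := ((add_eq_zero_iff_of_nonneg (hσ.eigenvalues_nonneg _)
    (mul_nonneg ht.le (hρ.eigenvalues_nonneg _))).1 hk).2
  rw [(mul_eq_zero_iff_left ht.ne').1 hp, Complex.ofReal_zero, mul_zero]

lemma isGreatest_range_resolventForm (hσ : σ.PosSemidef) (hρ : ρ.PosSemidef) {t : ℝ}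
    (ht : 0 < t) :
    IsGreatest (Set.range (resolventForm ρ σ t))
      (∑ k, nsFst hσ.isHermitian hρ.isHermitian k ^ 2 /
        (nsSnd hσ.isHermitian hρ.isHermitian k +
          t * nsFst hσ.isHermitian hρ.isHermitian k)) := by
  constructor
  · obtain ⟨X, hX⟩ := exists_eigenCoord_eq hσ.isHermitian hρ.isHermitian (of fun j i ↦
      eigenCoord hσ.isHermitian hρ.isHermitian 1 j i * hρ.isHermitian.eigenvalues i /
        (hσ.isHermitian.eigenvalues j + t * hρ.isHermitian.eigenvalues i : ℝ))
    exact ⟨X, by simp [resolventForm_eq_sub hσ hρ ht, hX]⟩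
  · rintro _ ⟨X, rfl⟩
    rw [resolventForm_eq_sub hσ hρ ht]
    exact sub_le_self _ <| Finset.sum_nonneg fun k _ ↦ mul_nonneg (add_nonneg
      (hσ.eigenvalues_nonneg _) (mul_nonneg ht.le (hρ.eigenvalues_nonneg _)))
        (Complex.normSq_nonneg _)

end NussbaumSzkola

section Channel

open Matrix
open scoped MatrixOrder

/-- `k`-positivity of a linear map: `Λ ⊗ id_k` is positive. Complete positivity is
`k`-positivity for every `k`. -/
def IsKPositive {m n : Type*} (k : ℕ) (Λ : Matrix m m ℂ →ₗ[ℂ] Matrix n n ℂ) : Prop :=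
  ∀ A, A.PosSemidef → (mapTensorId Λ k A).PosSemidef

/-- The dual of `Λ` under the bilinear pairing `(Y, A) ↦ tr (Y A)`: the Heisenberg picture of the
map. -/
def traceDual {m n : Type*} [DecidableEq m] [Fintype n]
    (Λ : Matrix m m ℂ →ₗ[ℂ] Matrix n n ℂ) (Y : Matrix n n ℂ) : Matrix m m ℂ :=
  of fun i j ↦ (Y * Λ (single j i 1)).trace

variable {m n : Type*} {Λ : Matrix m m ℂ →ₗ[ℂ] Matrix n n ℂ} {k : ℕ} {ρ σ : Matrix m m ℂ}
  {τ : Matrix n n ℂ}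

lemma IsKPositive.posSemidef_of_blocks [Fintype m] (hΛ : IsKPositive k Λ)
    (hσ : σ.PosSemidef) (R : Fin k → Matrix m m ℂ) :
    (of fun p q : n × Fin k ↦ Λ ((R p.2)ᴴ * σ * R q.2) p.1 q.1).PosSemidef := by
  have h := hΛ _ (hσ.conjTranspose_mul_mul_same (of fun i (p : m × Fin k) ↦ R p.2 i p.1))
  have hblock (p q : n × Fin k) :
      (of fun i j ↦ ((of fun i (p : m × Fin k) ↦ R p.2 i p.1)ᴴ * σ *
        of fun i (p : m × Fin k) ↦ R p.2 i p.1) (i, p.2) (j, q.2)) =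
          (R p.2)ᴴ * σ * R q.2 := by
    ext i j
    simp only [of_apply, mul_apply, conjTranspose_apply]
  convert h using 1
  ext p q
  rw [of_apply, mapTensorId, hblock]

lemma IsKPositive.map_posSemidef [Finite m] [NeZero k] (hΛ : IsKPositive k Λ)
    (hσ : σ.PosSemidef) : (Λ σ).PosSemidef := by
  classical
  cases nonempty_fintype m
  have h := (hΛ.posSemidef_of_blocks hσ fun _ ↦ 1).submatrix fun i ↦ (i, 0)
  simp only [conjTranspose_one, Matrix.one_mul, Matrix.mul_one] at h
  exact h

lemma IsKPositive.map_conjTranspose [Finite m] (hΛ : IsKPositive 2 Λ) (A : Matrix m m ℂ) :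
    (Λ A)ᴴ = Λ Aᴴ := by
  classical
  cases nonempty_fintype m
  have h := (hΛ.posSemidef_of_blocks (PosSemidef.one (n := m) (R := ℂ)) ![1, A]).isHermitian
  ext i j
  simpa using h.apply (i, 1) (j, 0)

variable [Fintype n]

lemma IsKPositive.posSemidef_sum [Fintype m] (hΛ : IsKPositive k Λ)
    (hσ : σ.PosSemidef) (R : Fin k → Matrix m m ℂ) (S : Fin k → Matrix n n ℂ) :
    (∑ a, ∑ b, (S a)ᴴ * Λ ((R a)ᴴ * σ * R b) * S b).PosSemidef := by
  have h := (hΛ.posSemidef_of_blocks hσ R).conjTranspose_mul_mul_same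
    (of fun (p : n × Fin k) j ↦ S p.2 p.1 j)
  convert h using 1
  ext i j
  simp only [mul_apply, Matrix.sum_apply, Fintype.sum_prod_type_right, Finset.sum_mul, of_apply,
    conjTranspose_apply]
  rw [Finset.sum_comm]
  refine Finset.sum_congr rfl fun b _ ↦ ?_
  rw [Finset.sum_comm]

variable [DecidableEq m]

lemma trace_traceDual_mul [Fintype m] (Λ : Matrix m m ℂ →ₗ[ℂ] Matrix n n ℂ)
    (Y : Matrix n n ℂ) (A : Matrix m m ℂ) : (traceDual Λ Y * A).trace = (Y * Λ A).trace := by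
  induction A using Matrix.induction_on' with
  | h_zero => simp
  | h_add A B hA hB => rw [Matrix.mul_add, trace_add, hA, hB, map_add, Matrix.mul_add, trace_add]
  | h_std_basis i j x =>
    have hx : single i j x = x • single i j (1 : ℂ) := by simp
    rw [trace_mul_single, hx, map_smul, Matrix.mul_smul, trace_smul, traceDual, of_apply,
      op_smul_eq_mul, smul_eq_mul, mul_comm]

lemma traceDual_conjTranspose [Finite m] (hΛ : IsKPositive 2 Λ) (Y : Matrix n n ℂ) :
    traceDual Λ Yᴴ = (traceDual Λ Y)ᴴ := by
  ext i j
  rw [conjTranspose_apply, traceDual, traceDual, of_apply, of_apply, ← trace_conjTranspose,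
    conjTranspose_mul, hΛ.map_conjTranspose, conjTranspose_single, star_one, trace_mul_comm]

variable [Fintype m]

-- The Kadison–Schwarz inequality `Λ†(Y) Λ†(Y)ᴴ ≤ Λ†(Y Yᴴ)` for the dual map `Λ†`, traced
-- against `σ`.
lemma trace_traceDual_mul_mul_re_le (hΛ : IsKPositive 2 Λ) (hTP : IsTP Λ) (hσ : σ.PosSemidef)
    (Y : Matrix n n ℂ) :
    ((traceDual Λ Y)ᴴ * σ * traceDual Λ Y).trace.re ≤ (Yᴴ * Λ σ * Y).trace.re := by
  classical
  have h := (hΛ.posSemidef_sum hσ ![traceDual Λ Y, 1] ![1, -Y]).trace_nonneg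
  simp only [Fin.sum_univ_two, cons_val_zero, cons_val_one, conjTranspose_one, Matrix.one_mul,
    Matrix.mul_one, conjTranspose_neg, Matrix.neg_mul, Matrix.mul_neg, neg_neg, trace_add,
    trace_neg, hTP _, ← trace_traceDual_mul, traceDual_conjTranspose hΛ] at h
  rw [trace_mul_comm (Λ _) Y, ← trace_traceDual_mul, trace_mul_comm (traceDual Λ Y),
    ← Matrix.mul_assoc] at h
  simpa using (Complex.le_def.1 h).1

lemma resolventForm_map_le (hΛ : IsKPositive 2 Λ) (hTP : IsTP Λ) (hρ : ρ.PosSemidef)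
    (hσ : σ.PosSemidef) (hle : Λ σ ≤ τ) {t : ℝ} (ht : 0 ≤ t) (Y : Matrix n n ℂ) :
    resolventForm (Λ ρ) τ t Y ≤ resolventForm ρ σ t (traceDual Λ Y) := by
  have hlin : (Yᴴ * Λ ρ).trace = ((traceDual Λ Y)ᴴ * ρ).trace := by
    rw [← traceDual_conjTranspose hΛ, trace_traceDual_mul]
  have hτ : (Yᴴ * Λ σ * Y).trace.re ≤ (Yᴴ * τ * Y).trace.re := by
    have h := (Complex.le_def.1
      ((Matrix.le_iff.1 hle).conjTranspose_mul_mul_same Y).trace_nonneg).1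
    simpa [Matrix.mul_sub, Matrix.sub_mul] using h
  have hσY := trace_traceDual_mul_mul_re_le hΛ hTP hσ Y
  have hρY := trace_traceDual_mul_mul_re_le hΛ hTP hρ Yᴴ
  simp only [traceDual_conjTranspose hΛ, conjTranspose_conjTranspose] at hρY
  rw [trace_mul_cycle _ ρ, trace_mul_cycle _ (Λ ρ)] at hρY
  have := mul_le_mul_of_nonneg_left hρY ht
  rw [resolventForm, resolventForm, hlin]
  linarith

theorem relEnt_map_le [DecidableEq n] (hΛ : IsKPositive 2 Λ) (hTP : IsTP Λ) (hρ : ρ.PosSemidef)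
    (hσ : σ.PosSemidef) (hle : Λ σ ≤ τ) : relEnt (Λ ρ) τ ≤ relEnt ρ σ := by
  by_cases hsupp : SuppLE ρ σ
  swap
  · rw [relEnt.eq_1 ρ, if_neg hsupp]
    exact le_top
  have hΛρ := hΛ.map_posSemidef hρ
  have hτ : τ.PosSemidef :=
    Matrix.nonneg_iff_posSemidef.1 ((hΛ.map_posSemidef hσ).nonneg.trans hle)
  set P := nsFst hσ.isHermitian hρ.isHermitian
  set Q := nsSnd hσ.isHermitian hρ.isHermitian
  set P' := nsFst hτ.isHermitian hΛρ.isHermitian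
  set Q' := nsSnd hτ.isHermitian hΛρ.isHermitian
  have hres (t : ℝ) (ht : 0 < t) :
      ∑ k, P' k ^ 2 / (Q' k + t * P' k) ≤ ∑ k, P k ^ 2 / (Q k + t * P k) := by
    obtain ⟨Y, hY⟩ := (isGreatest_range_resolventForm hτ hΛρ ht).1
    exact hY.ge.trans <| (resolventForm_map_le hΛ hTP hρ hσ hle ht.le Y).trans <|
      (isGreatest_range_resolventForm hσ hρ ht).2 (Set.mem_range_self _)
  have hP := nsFst_nonneg hσ.isHermitian hρ
  have hQ := nsSnd_nonneg hσ hρ.isHermitian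
  have hP' := nsFst_nonneg hτ.isHermitian hΛρ
  have hQ' := nsSnd_nonneg hτ hΛρ.isHermitian
  have hPQ := (suppLE_iff_nsFst_eq_zero hσ.isHermitian hρ).1 hsupp
  have hPQ' := fun k ↦ eq_zero_of_sum_sq_div_le hP hQ hP' hQ' hPQ hres (j := k)
  have hsum : ∑ k, P k = ∑ k, P' k := by
    rw [← trace_re_eq_sum_nsFst, ← trace_re_eq_sum_nsFst, hTP]
  rw [relEnt_eq_sum hσ.isHermitian hρ hsupp, relEnt_eq_sum hτ.isHermitian hΛρ
    ((suppLE_iff_nsFst_eq_zero hτ.isHermitian hΛρ).2 hPQ'), EReal.coe_le_coe_iff]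
  exact sum_mul_log_sub_log_le_of_sum_sq_div_le hP hQ hP' hQ' hPQ hPQ' hsum hres

theorem relEnt_map_le_add_log [DecidableEq n] (hΛ : IsKPositive 2 Λ) (hTP : IsTP Λ)
    (hρ : ρ.PosSemidef) (hσ : σ.PosSemidef) {a : ℝ} (ha : a ≠ 0) (hle : Λ σ ≤ a • τ) :
    relEnt (Λ ρ) τ ≤ relEnt ρ σ + ((ρ.trace.re * Real.log a : ℝ) : EReal) := by
  have haτ : (a • τ).IsHermitian := (Matrix.nonneg_iff_posSemidef.1
    ((hΛ.map_posSemidef hσ).nonneg.trans hle)).isHermitian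
  have hτ : τ.IsHermitian := by
    rw [← inv_smul_smul₀ ha τ]
    exact haτ.smul (IsSelfAdjoint.all _)
  have h := relEnt_map_le hΛ hTP hρ hσ hle
  rw [relEnt_smul_right hτ ha, hTP] at h
  exact (EReal.sub_le_iff_le_add (.inl (EReal.coe_ne_bot _)) (.inl (EReal.coe_ne_top _))).1 h

lemma exists_le_smul_of_rob_lt [DecidableEq n] {M : Set (Matrix n n ℂ)}
    (hM : ∀ τ ∈ M, τ.PosSemidef) {A : Matrix n n ℂ} {s : ℝ} (h : Rob M A < s) :
    ∃ τ ∈ M, A ≤ (1 + s) • τ := by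
  obtain ⟨_, ⟨r, hr, ⟨ω, hω, hmem⟩, rfl⟩, hrs⟩ := sInf_lt_iff.1 h
  have hr1 : (1 + r : ℂ) ≠ 0 := by exact_mod_cast (by positivity : 1 + r ≠ 0)
  refine ⟨_, hmem, ?_⟩
  set τ := (1 + r : ℂ)⁻¹ • (A + (r : ℂ) • ω) with hτ
  have hmix : A + r • ω = (1 + r) • τ := by
    rw [hτ, ← Complex.coe_smul (1 + r), Complex.ofReal_add, Complex.ofReal_one,
      smul_inv_smul₀ hr1, Complex.coe_smul]
  calc
    A ≤ A + r • ω := le_add_of_nonneg_right (smul_nonneg hr hω.1.nonneg)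
    _ = (1 + r) • τ := hmix
    _ ≤ (1 + s) • τ := by
      have := (hM τ hmem).nonneg
      gcongr
      exact (EReal.coe_lt_coe_iff.1 hrs).le

end Channel

theorem DRes_monotone_delta_rng_general {m n : Type*} [Fintype m] [DecidableEq m] [Fintype n]
    [DecidableEq n] {M : Set (Matrix m m ℂ)} {M' : Set (Matrix n n ℂ)}
    (hM : ∀ σ ∈ M, σ.PosSemidef) (hM' : ∀ σ ∈ M', σ.PosSemidef) {δ : ℝ} (hδ : 0 ≤ δ)
    {Λ : Matrix m m ℂ →ₗ[ℂ] Matrix n n ℂ} (hΛ : IsKPositive 2 Λ) (hTP : IsTP Λ)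
    (hRNG : ∀ σ ∈ M, Rob M' (Λ σ) ≤ (δ : EReal)) {ρ : Matrix m m ℂ} (hρ : IsDensity ρ) :
    (⨅ σ' ∈ M', relEnt (Λ ρ) σ') ≤
      (⨅ σ ∈ M, relEnt ρ σ) + ((Real.log (1 + δ) : ℝ) : EReal) := by
  rw [← EReal.sub_le_iff_le_add (by simp) (by simp)]
  refine le_iInf₂ fun σ hσ ↦ ?_
  rw [EReal.sub_le_iff_le_add (by simp) (by simp)]
  have hbound (s : ℝ) (hs : δ < s) :
      (⨅ σ' ∈ M', relEnt (Λ ρ) σ') ≤ relEnt ρ σ + ((Real.log (1 + s) : ℝ) : EReal) := by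
    obtain ⟨τ, hτ, hle⟩ := exists_le_smul_of_rob_lt hM'
      ((hRNG σ hσ).trans_lt (EReal.coe_lt_coe_iff.2 hs))
    have h := relEnt_map_le_add_log hΛ hTP hρ.1 (hM σ hσ) (by linarith) hle
    rw [hρ.2, Complex.one_re, one_mul] at h
    exact (iInf₂_le τ hτ).trans h
  have hlim : ContinuousAt (fun s : ℝ ↦ relEnt ρ σ + ((Real.log (1 + s) : ℝ) : EReal)) δ := by
    have hlog : ContinuousAt (fun s : ℝ ↦ Real.log (1 + s)) δ := by
      have : 1 + δ ≠ 0 := by positivity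
      fun_prop (disch := assumption)
    exact (EReal.continuousAt_add (by simp) (by simp)).comp
      (continuousAt_const.prodMk (continuous_coe_real_ereal.continuousAt.comp hlog))
  exact ge_of_tendsto (hlim.tendsto.mono_left (nhdsWithin_le_nhds (s := Set.Ioi δ)))
    (eventually_nhdsWithin_of_forall hbound)

lemma log_one_add_le_neg_log_one_sub {x : ℝ} (hx : 0 ≤ x) (hx1 : x < 1) :
    Real.log (1 + x) ≤ -Real.log (1 - x) := by
  have h : Real.log (1 + x) + Real.log (1 - x) ≤ 0 := by
    rw [← Real.log_mul (by linarith) (by linarith)]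
    exact Real.log_nonpos (by nlinarith) (by nlinarith)
  linarith

/-- Monotonicity of the relative entropy of resource under
`δ`-resource-non-generating channels: if `Λ` is CPTP and `R_{M'}(Λ(σ)) ≤ δ` for every
`σ ∈ M`, then `D_{M'}(Λ(ρ)) ≤ D_M(ρ) - log(1-δ)` for every state `ρ`. -/
theorem DRes_monotone_delta_rng
    (M : Set (Matrix ι ι ℂ)) (M' : Set (Matrix κ κ ℂ))
    (hMd : ∀ σ ∈ M, IsDensity σ) (hMc : IsClosed M) (hMconv : Convex ℝ M)
    (hM'd : ∀ σ ∈ M', IsDensity σ) (hM'c : IsClosed M') (hM'conv : Convex ℝ M')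
    (δ : ℝ) (hδ0 : 0 ≤ δ) (hδ1 : δ < 1)
    (Λ : Matrix ι ι ℂ →ₗ[ℂ] Matrix κ κ ℂ) (hCP : IsCP Λ) (hTP : IsTP Λ)
    (hRNG : ∀ σ ∈ M, Rob M' (Λ σ) ≤ ((δ : ℝ) : EReal))
    (ρ : Matrix ι ι ℂ) (hρ : IsDensity ρ) :
    (⨅ σ' ∈ M', relEnt (Λ ρ) σ') ≤ (⨅ σ ∈ M, relEnt ρ σ) - ((Real.log (1 - δ) : ℝ) : EReal) := by
  rw [sub_eq_add_neg, ← EReal.coe_neg]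
  refine (DRes_monotone_delta_rng_general (fun σ hσ ↦ (hMd σ hσ).1) (fun σ hσ ↦ (hM'd σ hσ).1)
    hδ0 (hCP 2) hTP hRNG hρ).trans ?_
  gcongr
  exact log_one_add_le_neg_log_one_sub hδ0 hδ1
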